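/- Let X ∈ ℝ^{n×p}, y ∈ ℝⁿ, f(g,l) = (2n)⁻¹‖X(g∘l) − y‖², and consider the gradient descent iterates g_{t+1} = g_t − η l_t ∘ [n⁻¹Xᵀ(X(g_t∘l_t) − y)], l_{t+1} = l_t − η g_t ∘ [n⁻¹Xᵀ(X(g_t∘l_t) − y)] initialized with all 2p coordinates of (g₀, l₀) drawn i.i.d. from the uniform distribution on (−α, α). Then there exists η₀ > 0 such that for every step size 0 < η < η₀, with probability one over the random initialization, the iterates (g_t, l_t) converge to a global minimum of f. -/

import Mathlib

open MeasureTheory ProbabilityTheory Matrix Filter Topology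

noncomputable section

/-- Hadamard (entrywise) product of two vectors. -/
def had {p : ℕ} (u v : Fin p → ℝ) : Fin p → ℝ := fun j => u j * v j

/-- Euclidean norm of a vector. -/
def nrm2 {p : ℕ} (v : Fin p → ℝ) : ℝ := Real.sqrt (∑ j, (v j) ^ 2)

/-- ℓ1 norm of a vector. -/
def nrm1 {p : ℕ} (v : Fin p → ℝ) : ℝ := ∑ j, |v j|

/-- Sup norm of a vector. -/
def nrmInf {p : ℕ} (v : Fin p → ℝ) : ℝ := ⨆ j, |v j|

/-- A vector is `s`-sparse if it has at most `s` nonzero entries. -/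
def Sparse {p : ℕ} (s : ℕ) (v : Fin p → ℝ) : Prop := {j | v j ≠ 0}.ncard ≤ s

/-- The `(s, δ)`-Restricted Isometry Property:
`(1−δ)‖u‖² ≤ n⁻¹‖Xu‖² ≤ (1+δ)‖u‖²` for all `s`-sparse `u`. -/
def RIP {n p : ℕ} (X : Matrix (Fin n) (Fin p) ℝ) (s : ℕ) (δ : ℝ) : Prop :=
  ∀ u : Fin p → ℝ, Sparse s u →
    (1 - δ) * nrm2 u ^ 2 ≤ (n : ℝ)⁻¹ * nrm2 (X.mulVec u) ^ 2 ∧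
      (n : ℝ)⁻¹ * nrm2 (X.mulVec u) ^ 2 ≤ (1 + δ) * nrm2 u ^ 2

/-- The over-parametrized quadratic loss `f(g,l) = (2n)⁻¹‖X(g∘l) − y‖²`. -/
def lossFun {n p : ℕ} (X : Matrix (Fin n) (Fin p) ℝ) (y : Fin n → ℝ)
    (gl : (Fin p → ℝ) × (Fin p → ℝ)) : ℝ :=
  (2 * (n : ℝ))⁻¹ * nrm2 (X.mulVec (had gl.1 gl.2) - y) ^ 2

/-- One step of gradient descent on `f(g,l)`. -/
def gdStep {n p : ℕ} (X : Matrix (Fin n) (Fin p) ℝ) (y : Fin n → ℝ) (η : ℝ)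
    (gl : (Fin p → ℝ) × (Fin p → ℝ)) : (Fin p → ℝ) × (Fin p → ℝ) :=
  (gl.1 - η • had gl.2 ((n : ℝ)⁻¹ • Xᵀ.mulVec (X.mulVec (had gl.1 gl.2) - y)),
    gl.2 - η • had gl.1 ((n : ℝ)⁻¹ • Xᵀ.mulVec (X.mulVec (had gl.1 gl.2) - y)))

/-- The uniform distribution on `(−α, α)`. -/
def unifMeasure (α : ℝ) : Measure ℝ :=
  (ENNReal.ofReal (2 * α))⁻¹ • volume.restrict (Set.Ioo (-α) α)

/-- Law of `(g₀, l₀)` with all `2p` coordinates i.i.d. uniform on `(−α, α)`. -/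
def initMeasure (p : ℕ) (α : ℝ) : Measure ((Fin p → ℝ) × (Fin p → ℝ)) :=
  (Measure.pi fun _ : Fin p => unifMeasure α).prod (Measure.pi fun _ : Fin p => unifMeasure α)


lemma mat_bound {m k : ℕ} (M : Matrix (Fin m) (Fin k) ℝ) :
    ∃ K : ℝ, 0 ≤ K ∧ ∀ z : Fin k → ℝ, (M *ᵥ z) ⬝ᵥ (M *ᵥ z) ≤ K * (z ⬝ᵥ z) := by
  refine ⟨∑ i, ∑ j, M i j ^ 2, by positivity, fun z => ?_⟩
  rw [Finset.sum_mul]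
  unfold dotProduct
  refine Finset.sum_le_sum fun i _ => ?_
  have := Finset.sum_mul_sq_le_sq_mul_sq Finset.univ (fun j => M i j) z
  simp only [← pow_two]
  simpa [mulVec, dotProduct] using this

lemma cone_pattern {n p : ℕ} (X : Matrix (Fin n) (Fin p) ℝ) (τ : Fin p → SignType) :
    ∃ κ : ℝ, 0 ≤ κ ∧ ∀ (z : Fin p → ℝ) (lam : Fin n → ℝ) (c : ℝ), (∀ j, SignType.sign (z j) = τ j) →
      (∀ j, z j ≠ 0 → 0 < z j * (Xᵀ *ᵥ lam) j) → (∀ i, |(X *ᵥ z) i| ≤ c) →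
      ∀ j, |z j| ≤ κ * c := by
  by_cases h : ∃ (z0 : Fin p → ℝ) (lam : Fin n → ℝ), (∀ j, SignType.sign (z0 j) = τ j) ∧
      (∀ j, z0 j ≠ 0 → 0 < z0 j * (Xᵀ *ᵥ lam) j)
  · obtain ⟨z0, lam, h1, h2⟩ := h
    set s := Xᵀ *ᵥ lam with hs
    refine ⟨∑ j, (∑ i, |lam i|) / |s j|, by positivity, fun z _ c hz _ hc j => ?_⟩
    have hzs : ∀ j, z j * s j = |z j| * |s j| := by
      intro j
      have e : SignType.sign (z j) = SignType.sign (z0 j) := by rw [hz, h1]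
      rw [← abs_mul]
      symm
      apply abs_of_nonneg
      rcases lt_trichotomy (z0 j) 0 with h0 | h0 | h0
      · have := h2 j h0.ne
        rw [sign_neg h0, sign_eq_neg_one_iff] at e
        nlinarith
      · rw [h0, sign_zero, sign_eq_zero_iff] at e
        simp [e]
      · have := h2 j h0.ne'
        rw [sign_pos h0, sign_eq_one_iff] at e
        nlinarith
    have key : ∑ j, |z j| * |s j| ≤ (∑ i, |lam i|) * c := by
      simp_rw [← hzs]
      have e : ∑ j, z j * s j = ∑ i, lam i * (X *ᵥ z) i := by
        change z ⬝ᵥ s = lam ⬝ᵥ (X *ᵥ z)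
        rw [hs, dotProduct_mulVec, vecMul_transpose, dotProduct_comm]
      rw [e, Finset.sum_mul]
      refine Finset.sum_le_sum fun i _ => ?_
      calc lam i * (X *ᵥ z) i ≤ |lam i * (X *ᵥ z) i| := le_abs_self _
        _ = |lam i| * |(X *ᵥ z) i| := abs_mul _ _
        _ ≤ _ := by gcongr; exact hc i
    by_cases hzj : z j = 0
    · rw [hzj, abs_zero]
      by_cases hl : ∑ i, |lam i| = 0
      · simp [hl]
      have : 0 < ∑ i, |lam i| := lt_of_le_of_ne (by positivity) (Ne.symm hl)
      have h0 : 0 ≤ (∑ i, |lam i|) * c := le_trans (by positivity) key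
      have : 0 ≤ c := by
        by_contra hcc
        push Not at hcc
        nlinarith
      positivity
    · have hz0 : z0 j ≠ 0 := by
        intro h0
        have e : SignType.sign (z j) = SignType.sign (z0 j) := by rw [hz, h1]
        rw [h0, sign_zero, sign_eq_zero_iff] at e
        exact hzj e
      have hsj : 0 < |s j| := by
        apply abs_pos.2
        intro h0
        have := h2 j hz0
        rw [h0] at this
        simp at this
      have hj : |z j| * |s j| ≤ (∑ i, |lam i|) * c := 
        le_trans (Finset.single_le_sum (f := fun j => |z j| * |s j|) (fun _ _ => by positivity) (Finset.mem_univ j)) key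
      have hl0 : 0 ≤ (∑ i, |lam i|) * c := le_trans (by positivity) hj
      rw [Finset.sum_mul]
      refine le_trans ?_ (Finset.single_le_sum (f := fun j => (∑ i, |lam i|) / |s j| * c) (fun k _ => ?_) (Finset.mem_univ j))
      · rw [div_mul_eq_mul_div, le_div_iff₀ hsj]; exact hj
      · rw [div_mul_eq_mul_div]; positivity
  · refine ⟨0, le_rfl, fun z lam c hz hl _ => ?_⟩
    exact absurd ⟨z, lam, hz, hl⟩ h

lemma cone_bound {n p : ℕ} (X : Matrix (Fin n) (Fin p) ℝ) :
    ∃ κ : ℝ, 0 ≤ κ ∧ ∀ (z : Fin p → ℝ) (lam : Fin n → ℝ) (c : ℝ), 0 ≤ c →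
      (∀ j, z j ≠ 0 → 0 < z j * (Xᵀ *ᵥ lam) j) → (∀ i, |(X *ᵥ z) i| ≤ c) →
      ∀ j, |z j| ≤ κ * c := by
  choose κ h0 h using cone_pattern X
  refine ⟨∑ τ, κ τ, Finset.sum_nonneg fun τ _ => h0 τ, fun z lam c hc hl hX j => ?_⟩
  refine (h (fun j => SignType.sign (z j)) z lam c (fun _ => rfl) hl hX j).trans ?_
  gcongr
  exact Finset.single_le_sum (f := κ) (fun τ _ => h0 τ) (Finset.mem_univ _)

def bet {p : ℕ} (u v : Fin p → ℝ) : Fin p → ℝ := fun j => (u j ^ 2 - v j ^ 2) / 4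

lemma traj_bound {n p : ℕ} (X : Matrix (Fin n) (Fin p) ℝ) (α : ℝ) (hα : 0 < α) (C : ℝ) (hC : 0 ≤ C) :
    ∃ W : ℝ, 0 < W ∧ ∀ (u v : Fin p → ℝ) (lam : Fin n → ℝ),
      (∀ j, |u j| ≤ 2 * α * Real.exp ((Xᵀ *ᵥ lam) j)) →
      (∀ j, |v j| ≤ 2 * α * Real.exp (-(Xᵀ *ᵥ lam) j)) →
      (∀ i, |(X *ᵥ bet u v) i| ≤ C) → ∀ j, u j ^ 2 + v j ^ 2 ≤ W := by
  obtain ⟨κ, hκ, h⟩ := cone_bound X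
  set K := ∑ i, ∑ j, |X i j| with hK
  have hK0 : 0 ≤ K := by positivity
  set c := C + α ^ 2 * K with hc
  have hc0 : 0 ≤ c := by positivity
  set B := α ^ 2 + κ * c with hB
  have hB0 : 0 < B := by positivity
  refine ⟨8 * (B + α ^ 2), by positivity, fun u v lam hu hv hX => ?_⟩
  set s := Xᵀ *ᵥ lam with hs
  have hu2 : ∀ j, u j ^ 2 ≤ 4 * α ^ 2 * Real.exp (s j) ^ 2 := fun j => by
    have := pow_le_pow_left₀ (abs_nonneg _) (hu j) 2
    rw [sq_abs] at this
    linarith [this]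
  have hv2 : ∀ j, v j ^ 2 ≤ 4 * α ^ 2 * Real.exp (-s j) ^ 2 := fun j => by
    have := pow_le_pow_left₀ (abs_nonneg _) (hv j) 2
    rw [sq_abs] at this
    linarith [this]
  set z : Fin p → ℝ := fun j => if α ^ 2 < |bet u v j| then bet u v j else 0 with hz
  have hpos : ∀ x : ℝ, 4 * α ^ 2 < 4 * α ^ 2 * Real.exp x ^ 2 → 0 < x := by
    intro x hx
    by_contra hx0
    have h1 : Real.exp x ≤ 1 := Real.exp_le_one_iff.2 (not_lt.1 hx0)
    have h2 : Real.exp x ^ 2 ≤ 1 := pow_le_one₀ (Real.exp_pos x).le h1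
    nlinarith [sq_nonneg α]
  have hzb : ∀ j, |z j| ≤ κ * c := by
    refine h z lam c hc0 ?_ ?_
    · intro j hj
      by_cases hb : α ^ 2 < |bet u v j|
      · simp only [hz, if_pos hb]
        rcases lt_abs.1 hb with h1 | h1
        · have : 0 < s j := hpos _ (by
            refine lt_of_lt_of_le ?_ (hu2 j); simp only [bet] at h1; nlinarith [sq_nonneg (v j)])
          have : 0 < bet u v j := by nlinarith [sq_nonneg α]
          positivity
        · have : 0 < - s j := hpos _ (by
            refine lt_of_lt_of_le ?_ (hv2 j); simp only [bet] at h1; nlinarith [sq_nonneg (u j)])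
          have : 0 < -bet u v j := by nlinarith [sq_nonneg α]
          nlinarith
      · simp [hz, hb] at hj
    · intro i
      have e : (X *ᵥ z) i = (X *ᵥ bet u v) i - ∑ j, X i j * (bet u v j - z j) := by
        simp only [mulVec, dotProduct, ← Finset.sum_sub_distrib]
        refine Finset.sum_congr rfl fun j _ => by ring
      have e2 : |∑ j, X i j * (bet u v j - z j)| ≤ α ^ 2 * K := by
        refine (Finset.abs_sum_le_sum_abs _ _).trans ?_
        have : ∑ j, |X i j| ≤ K := Finset.single_le_sum (f := fun i => ∑ j, |X i j|) (fun _ _ => by positivity) (Finset.mem_univ i)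
        refine le_trans ?_ (mul_le_mul_of_nonneg_left this (sq_nonneg α))
        rw [Finset.mul_sum]
        refine Finset.sum_le_sum fun j _ => ?_
        rw [abs_mul, mul_comm]
        gcongr
        by_cases hb : α ^ 2 < |bet u v j|
        · simp only [hz, if_pos hb]; simp; positivity
        · simp only [hz, if_neg hb]; simpa using hb
      rw [e]
      exact (abs_sub _ _).trans (add_le_add (hX i) e2)
  intro j
  have hbj : |bet u v j| ≤ B := by
    by_cases hb : α ^ 2 < |bet u v j|
    · have := hzb j
      simp only [hz, if_pos hb] at this
      nlinarith [sq_nonneg α]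
    · have : 0 ≤ κ * c := by positivity
      linarith
  have huv : u j ^ 2 * v j ^ 2 ≤ 16 * α ^ 4 := by
    calc u j ^ 2 * v j ^ 2 ≤ (4 * α ^ 2 * Real.exp (s j) ^ 2) * (4 * α ^ 2 * Real.exp (-s j) ^ 2) := by
          gcongr
          · exact hu2 j
          · exact hv2 j
      _ = 16 * α ^ 4 * (Real.exp (s j) * Real.exp (-s j)) ^ 2 := by ring
      _ = 16 * α ^ 4 := by rw [← Real.exp_add]; simp
  have hα2 : 0 < α ^ 2 := by positivity
  rw [abs_le] at hbj
  simp only [bet] at hbj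
  have hu3 : u j ^ 2 ≤ 4 * (B + α ^ 2) := by
    by_contra hcon
    push Not at hcon
    have : 4 * α ^ 2 < v j ^ 2 := by linarith [hbj.2]
    nlinarith
  have hv3 : v j ^ 2 ≤ 4 * (B + α ^ 2) := by
    by_contra hcon
    push Not at hcon
    have : 4 * α ^ 2 < u j ^ 2 := by linarith [hbj.1]
    nlinarith
  linarith

lemma normal_eq {n p : ℕ} (X : Matrix (Fin n) (Fin p) ℝ) (y : Fin n → ℝ) :
    ∃ b : Fin p → ℝ, Xᵀ *ᵥ (X *ᵥ b) = Xᵀ *ᵥ y := by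
  have h1 : LinearMap.range (Xᵀ * X).mulVecLin ≤ LinearMap.range Xᵀ.mulVecLin := by
    rintro _ ⟨z, rfl⟩
    exact ⟨X *ᵥ z, by simp⟩
  have h2 := Submodule.eq_of_le_of_finrank_eq h1 (by
    have := Matrix.rank_transpose_mul_self X
    rw [← Matrix.rank_transpose X] at this
    exact this)
  have : Xᵀ *ᵥ y ∈ LinearMap.range (Xᵀ * X).mulVecLin := by rw [h2]; exact ⟨y, rfl⟩
  obtain ⟨b, hb⟩ := this
  exact ⟨b, by rw [mulVec_mulVec]; exact hb⟩

lemma step_scalar (u v q ε K W Q : ℝ) (hε : 0 < ε) (hK : 0 ≤ K) (hw : u ^ 2 + v ^ 2 ≤ W)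
    (hq : |q| ≤ Q) (h1 : ε * Q ≤ 1 / 2) (h2 : ε * K * W ≤ 1 / 2) :
    let δ := ((u * (1 - ε * q)) ^ 2 - (v * (1 + ε * q)) ^ 2) / 4 - (u ^ 2 - v ^ 2) / 4
    2 * (q * δ) + K * (δ * δ) ≤ 0 := by
  intro δ
  set w := u ^ 2 + v ^ 2 with hwd
  set β := (u ^ 2 - v ^ 2) / 4 with hβd
  have hw0 : 0 ≤ w := by positivity
  have hβ : |β| ≤ w / 4 := by
    rw [abs_le]; constructor <;> nlinarith [sq_nonneg u, sq_nonneg v]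
  have hx : |ε * q| ≤ 1 / 2 := by
    rw [abs_mul, abs_of_pos hε]
    exact (mul_le_mul_of_nonneg_left hq hε.le).trans h1
  set x := ε * q with hxd
  have hδ : δ = -x * w / 2 + x * (x * β) := by
    simp only [δ, hwd, hβd]; ring
  have hxβ : |x * β| ≤ w / 8 := by
    rw [abs_mul]
    calc |x| * |β| ≤ 1 / 2 * (w / 4) := by gcongr
      _ = w / 8 := by ring
  have hδ2 : δ * δ ≤ x ^ 2 * w ^ 2 := by
    have : δ = x * (-w / 2 + x * β) := by rw [hδ]; ring
    rw [this]
    have h3 : (-w / 2 + x * β) ^ 2 ≤ w ^ 2 := by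
      rw [abs_le] at hxβ
      apply sq_le_sq'
      · linarith
      · linarith
    calc x * (-w / 2 + x * β) * (x * (-w / 2 + x * β)) = x ^ 2 * (-w / 2 + x * β) ^ 2 := by ring
      _ ≤ _ := by gcongr
  have hqx : 0 ≤ ε * q ^ 2 := by positivity
  have e1 : q * δ ≤ -(3 / 8) * (ε * q ^ 2 * w) := by
    have : q * δ = ε * q ^ 2 * (-w / 2 + x * β) := by rw [hδ, hxd]; ring
    rw [this]
    have := (abs_le.1 hxβ).2
    nlinarith
  have e2 : K * (δ * δ) ≤ 1 / 2 * (ε * q ^ 2 * w) := by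
    calc K * (δ * δ) ≤ K * (x ^ 2 * w ^ 2) := by gcongr
      _ = (ε * K * w) * (ε * q ^ 2 * w) := by rw [hxd]; ring
      _ ≤ (ε * K * W) * (ε * q ^ 2 * w) := by gcongr
      _ ≤ 1 / 2 * (ε * q ^ 2 * w) := by gcongr
  have : 0 ≤ ε * q ^ 2 * w := by positivity
  linarith

lemma log_est (x : ℝ) (hx : |x| ≤ 1 / 2) : |Real.log (1 - x) + x| ≤ 2 * x ^ 2 := by
  rw [abs_le] at hx
  have h0 : 0 < 1 - x := by linarith [hx.2]
  have h1 := Real.log_le_sub_one_of_pos h0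
  have h2 := Real.one_sub_inv_le_log_of_pos h0
  have h3 : (1 - x)⁻¹ ≤ 1 + x + 2 * x ^ 2 := by
    rw [inv_le_iff_one_le_mul₀ h0]
    nlinarith [sq_nonneg x, mul_nonneg (sq_nonneg x) (by linarith : (0:ℝ) ≤ 1 - 2 * x)]
  rw [abs_le]
  constructor
  · linarith
  · nlinarith [sq_nonneg x]

lemma pot_scalar (u v x b W : ℝ) (hu : u ≠ 0) (hv : v ≠ 0) (hw : u ^ 2 + v ^ 2 ≤ W)
    (hx : |x| ≤ 1 / 2) :
    (((u * (1 - x)) ^ 2 + (v * (1 + x)) ^ 2) / 8 - max b 0 * Real.log |u * (1 - x)|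
      - max (-b) 0 * Real.log |v * (1 + x)|) ≤
    ((u ^ 2 + v ^ 2) / 8 - max b 0 * Real.log |u| - max (-b) 0 * Real.log |v|)
      - x * ((u ^ 2 - v ^ 2) / 4 - b) + x ^ 2 * (W / 8 + 2 * |b|) := by
  have hx' := abs_le.1 hx
  have h1 := (abs_le.1 (log_est x hx)).1
  have h2 := (abs_le.1 (log_est (-x) (by rwa [abs_neg]))).1
  rw [abs_mul, abs_mul, Real.log_mul (abs_pos.2 hu).ne' (abs_pos.2 (by linarith)).ne',
    Real.log_mul (abs_pos.2 hv).ne' (abs_pos.2 (by linarith)).ne', Real.log_abs, Real.log_abs, 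
    Real.log_abs, Real.log_abs]
  rw [sub_neg_eq_add] at h2
  have e1 : max b 0 - max (-b) 0 = b := by
    rcases le_total b 0 with h | h
    · rw [max_eq_right h, max_eq_left (by linarith)]; ring
    · rw [max_eq_left h, max_eq_right (by linarith)]; ring
  have e2 : max b 0 + max (-b) 0 = |b| := by
    rcases le_total b 0 with h | h
    · rw [max_eq_right h, max_eq_left (by linarith), abs_of_nonpos h]; ring
    · rw [max_eq_left h, max_eq_right (by linarith), abs_of_nonneg h]; ring
  have p1 : 0 ≤ max b 0 := le_max_right _ _
  have p2 : 0 ≤ max (-b) 0 := le_max_right _ _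
  have k1 := mul_le_mul_of_nonneg_left (show -x - 2 * x ^ 2 ≤ Real.log (1 - x) by linarith) p1
  have k2 := mul_le_mul_of_nonneg_left (show x - 2 * x ^ 2 ≤ Real.log (1 + x) by linarith) p2
  have k3 := mul_le_mul_of_nonneg_left hw (sq_nonneg x)
  have e3 : x * b = x * max b 0 - x * max (-b) 0 := by
    rw [← mul_sub, e1]
  have e4 : x ^ 2 * |b| = x ^ 2 * max b 0 + x ^ 2 * max (-b) 0 := by
    rw [← mul_add, e2]
  generalize max b 0 = m1 at *
  generalize max (-b) 0 = m2 at *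
  nlinarith

lemma conv_s {n p : ℕ} (X : Matrix (Fin n) (Fin p) ℝ) (b : Fin p → ℝ) (s A B : ℕ → Fin p → ℝ)
    (A' B' : Fin p → ℝ) (hA : Tendsto A atTop (𝓝 A')) (hB : Tendsto B atTop (𝓝 B'))
    (R : ℝ) (hs : ∀ t j, |s t j| ≤ R) (hrow : ∀ t, ∃ lam, s t = Xᵀ *ᵥ lam)
    (hX : Tendsto (fun t => X *ᵥ ((fun j => (Real.exp (2 * (A t j + s t j)) -
      Real.exp (2 * (B t j - s t j))) / 4) - b)) atTop (𝓝 0)) :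
    ∃ s' : Fin p → ℝ, Tendsto s atTop (𝓝 s') := by
  have hcomp : IsCompact (Set.univ.pi fun _ : Fin p => Set.Icc (-R) R) :=
    isCompact_univ_pi fun _ => isCompact_Icc
  have hmem : ∀ t, s t ∈ (Set.univ.pi fun _ : Fin p => Set.Icc (-R) R) := fun t j _ => abs_le.1 (hs t j)
  obtain ⟨s', -, φ, hφ, hs'⟩ := hcomp.tendsto_subseq hmem
  refine ⟨s', ?_⟩
  let h : (Fin p → ℝ) → Fin p → ℝ := fun σ j => (Real.exp (2 * (A' j + σ j)) -
      Real.exp (2 * (B' j - σ j))) / 4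
  have hlim : ∀ (σ : Fin p → ℝ) (φ : ℕ → ℕ), StrictMono φ → Tendsto (s ∘ φ) atTop (𝓝 σ) →
      X *ᵥ (h σ - b) = 0 := by
    intro σ φ hφ hσ
    refine tendsto_nhds_unique ?_ (hX.comp hφ.tendsto_atTop)
    have hA2 := hA.comp hφ.tendsto_atTop
    have hB2 := hB.comp hφ.tendsto_atTop
    have hc : Continuous fun abc : (Fin p → ℝ) × (Fin p → ℝ) × (Fin p → ℝ) =>
      X *ᵥ ((fun j => (Real.exp (2 * (abc.1 j + abc.2.2 j)) -
      Real.exp (2 * (abc.2.1 j - abc.2.2 j))) / 4) - b) := by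
      apply Continuous.matrix_mulVec continuous_const
      fun_prop
    have hpr : Tendsto (fun t => (A (φ t), B (φ t), s (φ t))) atTop (𝓝 (A', B', σ)) :=
      hA2.prodMk_nhds (hB2.prodMk_nhds hσ)
    have := (hc.tendsto (A', B', σ)).comp hpr
    simpa only [Function.comp_def] using this
  have key : ∀ (σ : Fin p → ℝ) (φ' : ℕ → ℕ), StrictMono φ' → Tendsto (s ∘ φ') atTop (𝓝 σ) → σ = s' := by
    intro σ φ' hφ' hσ
    have x1 := hlim σ φ' hφ' hσ
    have x2 := hlim s' φ hφ hs'
    have x3 : X *ᵥ (h σ - h s') = 0 := by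
      have : h σ - h s' = (h σ - b) - (h s' - b) := by abel
      rw [this, mulVec_sub, x1, x2, sub_zero]
    have orth : ∀ t, s t ⬝ᵥ (h σ - h s') = 0 := by
      intro t
      obtain ⟨lam, hl⟩ := hrow t
      rw [hl, dotProduct_comm, dotProduct_mulVec, vecMul_transpose, x3, zero_dotProduct]
    have hcd : Continuous fun z : Fin p → ℝ => z ⬝ᵥ (h σ - h s') := by
      unfold dotProduct; fun_prop
    have o1 : σ ⬝ᵥ (h σ - h s') = 0 :=
      tendsto_nhds_unique ((hcd.tendsto σ).comp hσ) (by simp only [Function.comp_def, orth]; exact tendsto_const_nhds)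
    have o2 : s' ⬝ᵥ (h σ - h s') = 0 :=
      tendsto_nhds_unique ((hcd.tendsto s').comp hs') (by simp only [Function.comp_def, orth]; exact tendsto_const_nhds)
    have o3 : ∑ j, (σ j - s' j) * (h σ j - h s' j) = 0 := by
      have : (σ - s') ⬝ᵥ (h σ - h s') = 0 := by rw [sub_dotProduct, o1, o2, sub_zero]
      simpa [dotProduct] using this
    have mono : ∀ (x y : Fin p → ℝ) j, x j < y j → h x j < h y j := by
      intro x y j hxy
      have a1 : Real.exp (2 * (A' j + x j)) < Real.exp (2 * (A' j + y j)) := Real.exp_lt_exp.2 (by linarith)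
      have a2 : Real.exp (2 * (B' j - y j)) < Real.exp (2 * (B' j - x j)) := Real.exp_lt_exp.2 (by linarith)
      simp only [h]; linarith
    have nonneg : ∀ j ∈ Finset.univ, 0 ≤ (σ j - s' j) * (h σ j - h s' j) := by
      intro j _
      rcases lt_trichotomy (σ j) (s' j) with hj | hj | hj
      · have := mono _ _ j hj
        nlinarith
      · simp [hj]
      · have := mono _ _ j hj
        nlinarith
    rw [Finset.sum_eq_zero_iff_of_nonneg nonneg] at o3
    funext j
    have oj := o3 j (Finset.mem_univ j)
    rcases lt_trichotomy (σ j) (s' j) with hj | hj | hj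
    · have := mono _ _ j hj
      nlinarith
    · exact hj
    · have := mono _ _ j hj
      nlinarith
  refine hcomp.tendsto_nhds_of_unique_mapClusterPt (Eventually.of_forall hmem) ?_
  intro σ _ hσ
  obtain ⟨φ', hφ', hl⟩ := MapClusterPt.tendsto_subseq hσ
  exact key σ φ' hφ' hl

lemma log_seq (u x : ℕ → ℝ) (hu0 : u 0 ≠ 0) (hrec : ∀ t, u (t + 1) = u t * (1 - x t))
    (hx : ∀ t, |x t| ≤ 1 / 2) (hsum : Summable fun t => x t ^ 2) :
    ∃ (A : ℕ → ℝ) (A' c : ℝ), c ^ 2 = 1 ∧ Tendsto A atTop (𝓝 A') ∧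
      ∀ t, u t = c * Real.exp (A t - ∑ i ∈ Finset.range t, x i) := by
  have hpos : ∀ t, 0 < 1 - x t := fun t => by linarith [(abs_le.1 (hx t)).2]
  have habs : 0 < |u 0| := abs_pos.2 hu0
  refine ⟨fun t => Real.log |u 0| + ∑ i ∈ Finset.range t, (Real.log (1 - x i) + x i),
    Real.log |u 0| + ∑' i, (Real.log (1 - x i) + x i), u 0 / |u 0|, ?_, ?_, ?_⟩
  · rw [div_pow, sq_abs]; field_simp
  · apply Tendsto.const_add
    apply HasSum.tendsto_sum_nat
    apply Summable.hasSum
    refine Summable.of_norm_bounded (hsum.mul_left 2) fun i => ?_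
    rw [Real.norm_eq_abs]
    exact log_est _ (hx i)
  · intro t
    induction t with
    | zero =>
      simp only [Finset.range_zero, Finset.sum_empty, add_zero, sub_zero]
      rw [Real.exp_log habs, div_mul_cancel₀ _ habs.ne']
    | succ t ih =>
      have e : Real.log |u 0| + ∑ i ∈ Finset.range (t + 1), (Real.log (1 - x i) + x i)
          - ∑ i ∈ Finset.range (t + 1), x i
        = (Real.log |u 0| + ∑ i ∈ Finset.range t, (Real.log (1 - x i) + x i)
          - ∑ i ∈ Finset.range t, x i) + Real.log (1 - x t) := by
        rw [Finset.sum_range_succ, Finset.sum_range_succ]; ring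
      rw [hrec, e, Real.exp_add, Real.exp_log (hpos t), ← mul_assoc, ← ih]

lemma exp_bound (A : ℕ → ℝ) (A' : ℝ) (hA : Tendsto A atTop (𝓝 A')) (σ : ℕ → ℝ) (W : ℝ)
    (h : ∀ t, Real.exp (2 * (A t + σ t)) ≤ W) : ∃ R, ∀ t, σ t ≤ R := by
  obtain ⟨m, hm⟩ := hA.bddBelow_range
  refine ⟨Real.log W / 2 - m, fun t => ?_⟩
  have h1 : m ≤ A t := hm ⟨t, rfl⟩
  have h2 : 2 * (A t + σ t) ≤ Real.log W := by
    rw [← Real.log_exp (2 * (A t + σ t))]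
    exact Real.log_le_log (Real.exp_pos _) (h t)
  linarith

def qv {n p : ℕ} (X : Matrix (Fin n) (Fin p) ℝ) (b u v : Fin p → ℝ) : Fin p → ℝ :=
  Xᵀ *ᵥ (X *ᵥ (bet u v - b))

def Dv {n p : ℕ} (X : Matrix (Fin n) (Fin p) ℝ) (b u v : Fin p → ℝ) : ℝ :=
  (X *ᵥ (bet u v - b)) ⬝ᵥ (X *ᵥ (bet u v - b))

lemma Dv_nonneg {n p : ℕ} (X : Matrix (Fin n) (Fin p) ℝ) (b u v : Fin p → ℝ) : 0 ≤ Dv X b u v := by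
  unfold Dv dotProduct
  exact Finset.sum_nonneg fun _ _ => mul_self_nonneg _

lemma q_dot {n p : ℕ} (X : Matrix (Fin n) (Fin p) ℝ) (b u v z : Fin p → ℝ) :
    qv X b u v ⬝ᵥ z = (X *ᵥ (bet u v - b)) ⬝ᵥ (X *ᵥ z) := by
  rw [qv, dotProduct_comm, dotProduct_mulVec, vecMul_transpose, dotProduct_comm]

lemma sq_le_dot {k : ℕ} (z : Fin k → ℝ) (i : Fin k) : z i ^ 2 ≤ z ⬝ᵥ z := by
  rw [pow_two]
  exact Finset.single_le_sum (f := fun i => z i * z i) (fun _ _ => mul_self_nonneg _) (Finset.mem_univ i)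

lemma descent {n p : ℕ} (X : Matrix (Fin n) (Fin p) ℝ) (b u v u' v' : Fin p → ℝ) (ε K W Q : ℝ)
    (hK0 : 0 ≤ K) (hK : ∀ z : Fin p → ℝ, (X *ᵥ z) ⬝ᵥ (X *ᵥ z) ≤ K * (z ⬝ᵥ z)) (hε : 0 < ε)
    (hw : ∀ j, u j ^ 2 + v j ^ 2 ≤ W) (hq : ∀ j, |qv X b u v j| ≤ Q)
    (h1 : ε * Q ≤ 1 / 2) (h2 : ε * K * W ≤ 1 / 2)
    (hu : ∀ j, u' j = u j * (1 - ε * qv X b u v j))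
    (hv : ∀ j, v' j = v j * (1 + ε * qv X b u v j)) :
    Dv X b u' v' ≤ Dv X b u v := by
  set δ := bet u' v' - bet u v with hδ
  have e : bet u' v' - b = (bet u v - b) + δ := by rw [hδ]; abel
  have e2 : Dv X b u' v' = Dv X b u v + 2 * (qv X b u v ⬝ᵥ δ) + (X *ᵥ δ) ⬝ᵥ (X *ᵥ δ) := by
    rw [Dv, e, mulVec_add, q_dot, Dv, add_dotProduct, dotProduct_add, dotProduct_add,
      dotProduct_comm (X *ᵥ δ) (X *ᵥ (bet u v - b))]
    ring
  have e3 : 2 * (qv X b u v ⬝ᵥ δ) + K * (δ ⬝ᵥ δ) ≤ 0 := by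
    simp only [dotProduct, Finset.mul_sum, ← Finset.sum_add_distrib]
    refine Finset.sum_nonpos fun j _ => ?_
    have := step_scalar (u j) (v j) (qv X b u v j) ε K W Q hε hK0 (hw j) (hq j) h1 h2
    simp only [hδ, bet, Pi.sub_apply, hu, hv]
    exact this
  linarith [hK δ]

def pot {p : ℕ} (b u v : Fin p → ℝ) : ℝ :=
  ∑ j, ((u j ^ 2 + v j ^ 2) / 8 - max (b j) 0 * Real.log |u j| - max (-b j) 0 * Real.log |v j|)

lemma pot_step {n p : ℕ} (X : Matrix (Fin n) (Fin p) ℝ) (b u v u' v' : Fin p → ℝ) (ε K W Q : ℝ)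
    (hK : ∀ z : Fin n → ℝ, (Xᵀ *ᵥ z) ⬝ᵥ (Xᵀ *ᵥ z) ≤ K * (z ⬝ᵥ z)) (hε : 0 < ε) (hW : 0 < W)
    (hw : ∀ j, u j ^ 2 + v j ^ 2 ≤ W) (hq : ∀ j, |qv X b u v j| ≤ Q)
    (h1 : ε * Q ≤ 1 / 2) (h3 : ε * (K * (W / 8 + 2 * ∑ j, |b j|)) ≤ 1 / 2)
    (hu0 : ∀ j, u j ≠ 0) (hv0 : ∀ j, v j ≠ 0)
    (hu : ∀ j, u' j = u j * (1 - ε * qv X b u v j))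
    (hv : ∀ j, v' j = v j * (1 + ε * qv X b u v j)) :
    pot b u' v' ≤ pot b u v - ε / 2 * Dv X b u v := by
  set q := qv X b u v with hqd
  set Bb := ∑ j, |b j| with hBb
  have hBb0 : 0 ≤ Bb := by positivity
  have hb : ∀ j, |b j| ≤ Bb := fun j =>
    Finset.single_le_sum (f := fun j => |b j|) (fun _ _ => abs_nonneg _) (Finset.mem_univ j)
  have s1 : pot b u' v' ≤ ∑ j, (((u j ^ 2 + v j ^ 2) / 8 - max (b j) 0 * Real.log |u j| - max (-b j) 0 * Real.log |v j|)
      - ε * (q j * (bet u v - b) j) + ε ^ 2 * (W / 8 + 2 * Bb) * (q j * q j)) := by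
    refine Finset.sum_le_sum fun j _ => ?_
    have hx : |ε * q j| ≤ 1 / 2 := by
      rw [abs_mul, abs_of_pos hε]
      exact (mul_le_mul_of_nonneg_left (hq j) hε.le).trans h1
    have := pot_scalar (u j) (v j) (ε * q j) (b j) W (hu0 j) (hv0 j) (hw j) hx
    rw [hu, hv]
    refine this.trans ?_
    have k : (ε * q j) ^ 2 * (W / 8 + 2 * |b j|) ≤ ε ^ 2 * (W / 8 + 2 * Bb) * (q j * q j) := by
      calc (ε * q j) ^ 2 * (W / 8 + 2 * |b j|) ≤ (ε * q j) ^ 2 * (W / 8 + 2 * Bb) := by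
            gcongr; exact hb j
        _ = _ := by ring
    simp only [Pi.sub_apply, bet]
    linarith
  rw [Finset.sum_add_distrib, Finset.sum_sub_distrib, ← Finset.mul_sum, ← Finset.mul_sum] at s1
  have d1 : ∑ j, q j * (bet u v - b) j = Dv X b u v := q_dot X b u v (bet u v - b)
  have d2 : ∑ j, q j * q j ≤ K * Dv X b u v := hK _
  rw [d1] at s1
  have d3 : ε ^ 2 * (W / 8 + 2 * Bb) * ∑ j, q j * q j ≤ ε / 2 * Dv X b u v := by
    calc ε ^ 2 * (W / 8 + 2 * Bb) * ∑ j, q j * q j ≤ ε ^ 2 * (W / 8 + 2 * Bb) * (K * Dv X b u v) := by gcongr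
      _ = ε * (ε * (K * (W / 8 + 2 * Bb))) * Dv X b u v := by ring
      _ ≤ ε * (1 / 2) * Dv X b u v := by
        have := Dv_nonneg X b u v
        gcongr
      _ = _ := by ring
  change _ ≤ pot b u v - _ + _ at s1
  linarith

lemma pot_lower {p : ℕ} (b u v : Fin p → ℝ) (W : ℝ) (hw : ∀ j, u j ^ 2 + v j ^ 2 ≤ W) :
    -∑ j, |b j| * W ≤ pot b u v := by
  rw [← Finset.sum_neg_distrib]
  refine Finset.sum_le_sum fun j _ => ?_
  have hl : ∀ x : ℝ, x ^ 2 ≤ W → Real.log |x| ≤ W := by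
    intro x hx
    rcases eq_or_ne x 0 with h | h
    · simp only [h, abs_zero, Real.log_zero]; exact (sq_nonneg x).trans hx
    · have := Real.log_le_sub_one_of_pos (abs_pos.2 h)
      nlinarith [sq_nonneg (|x| - 1), sq_abs x, abs_nonneg x]
  have l1 := hl (u j) (by nlinarith [hw j, sq_nonneg (v j)])
  have l2 := hl (v j) (by nlinarith [hw j, sq_nonneg (u j)])
  have e2 : max (b j) 0 + max (-b j) 0 = |b j| := by
    rcases le_total (b j) 0 with h | h
    · rw [max_eq_right h, max_eq_left (by linarith), abs_of_nonpos h]; ring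
    · rw [max_eq_left h, max_eq_right (by linarith), abs_of_nonneg h]; ring
  have p1 := mul_le_mul_of_nonneg_left l1 (le_max_right (b j) 0)
  have p2 := mul_le_mul_of_nonneg_left l2 (le_max_right (-b j) 0)
  rw [← e2]
  nlinarith [sq_nonneg (u j), sq_nonneg (v j)]

lemma core {n p : ℕ} (X : Matrix (Fin n) (Fin p) ℝ) (b : Fin p → ℝ) (α : ℝ) (hα : 0 < α) :
    ∃ ε₀ : ℝ, 0 < ε₀ ∧ ∀ ε : ℝ, 0 < ε → ε < ε₀ → ∀ u v : ℕ → Fin p → ℝ,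
      (∀ j, |u 0 j| ≤ 2 * α) → (∀ j, |v 0 j| ≤ 2 * α) → (∀ j, u 0 j ≠ 0) → (∀ j, v 0 j ≠ 0) →
      (∀ t j, u (t + 1) j = u t j * (1 - ε * qv X b (u t) (v t) j)) →
      (∀ t j, v (t + 1) j = v t j * (1 + ε * qv X b (u t) (v t) j)) →
      ∃ u' v' : Fin p → ℝ, Tendsto u atTop (𝓝 u') ∧ Tendsto v atTop (𝓝 v') ∧
        X *ᵥ (bet u' v' - b) = 0 := by
  obtain ⟨K1, hK1, hKX'⟩ := mat_bound X
  obtain ⟨K2, hK2, hKT'⟩ := mat_bound Xᵀ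
  set K := K1 + K2 with hKd
  have hK0 : 0 ≤ K := by positivity
  have dn : ∀ {k : ℕ} (z : Fin k → ℝ), 0 ≤ z ⬝ᵥ z := fun z => Finset.sum_nonneg fun _ _ => mul_self_nonneg _
  have hKX : ∀ z : Fin p → ℝ, (X *ᵥ z) ⬝ᵥ (X *ᵥ z) ≤ K * (z ⬝ᵥ z) := fun z => by
    nlinarith [hKX' z, dn z]
  have hKT : ∀ z : Fin n → ℝ, (Xᵀ *ᵥ z) ⬝ᵥ (Xᵀ *ᵥ z) ≤ K * (z ⬝ᵥ z) := fun z => by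
    nlinarith [hKT' z, dn z]
  set D0 := K * ∑ j, (α ^ 2 + |b j|) ^ 2 with hD0
  have hD00 : 0 ≤ D0 := by positivity
  set C := Real.sqrt D0 + ∑ i, |(X *ᵥ b) i| with hC
  obtain ⟨W, hW, hbd⟩ := traj_bound X α hα C (by positivity)
  set Q := Real.sqrt (K * D0) with hQ
  have hQ0 : 0 ≤ Q := Real.sqrt_nonneg _
  set Bb := ∑ j, |b j| with hBb
  have hBb0 : 0 ≤ Bb := by positivity
  set Z := Q + K * W + K * (W / 8 + 2 * Bb) + 1 with hZ
  have z1 : 0 ≤ K * W := by positivity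
  have z2 : 0 ≤ K * (W / 8 + 2 * Bb) := by positivity
  have hZ0 : 0 < Z := by positivity
  refine ⟨1 / (2 * Z), by positivity, fun ε hε hε0 u v hu hv hu0 hv0 hru hrv => ?_⟩
  have hεZ : ε * Z ≤ 1 / 2 := by
    rw [lt_div_iff₀ (by positivity)] at hε0
    linarith
  have c1 : ε * Q ≤ 1 / 2 := le_trans (mul_le_mul_of_nonneg_left (by linarith) hε.le) hεZ
  have c2 : ε * K * W ≤ 1 / 2 := by
    rw [mul_assoc]; exact le_trans (mul_le_mul_of_nonneg_left (by linarith) hε.le) hεZ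
  have c3 : ε * (K * (W / 8 + 2 * Bb)) ≤ 1 / 2 := 
    le_trans (mul_le_mul_of_nonneg_left (by linarith) hε.le) hεZ
  have hQb : ∀ u v : Fin p → ℝ, Dv X b u v ≤ D0 → ∀ j, |qv X b u v j| ≤ Q := by
    intro u v hD j
    apply Real.abs_le_sqrt
    exact (sq_le_dot _ j).trans ((hKT _).trans (mul_le_mul_of_nonneg_left hD hK0))
  have hCb : ∀ u v : Fin p → ℝ, Dv X b u v ≤ D0 → ∀ i, |(X *ᵥ bet u v) i| ≤ C := by
    intro u v hD i
    have e : (X *ᵥ bet u v) i = (X *ᵥ (bet u v - b)) i + (X *ᵥ b) i := by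
      rw [mulVec_sub, Pi.sub_apply]; ring
    rw [e]
    refine (abs_add_le _ _).trans (add_le_add ?_ ?_)
    · apply Real.abs_le_sqrt
      exact (sq_le_dot _ i).trans hD
    · exact Finset.single_le_sum (f := fun i => |(X *ᵥ b) i|) (fun _ _ => abs_nonneg _) (Finset.mem_univ i)
  -- the invariant
  set lam : ℕ → Fin n → ℝ := fun t => ∑ i ∈ Finset.range t, (-ε) • (X *ᵥ (bet (u i) (v i) - b)) with hlam
  have hlamS : ∀ t j, (Xᵀ *ᵥ lam t) j = -∑ i ∈ Finset.range t, ε * qv X b (u i) (v i) j := by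
    intro t j
    simp only [hlam, mulVec_sum, mulVec_smul, Finset.sum_apply, Pi.smul_apply, smul_eq_mul, qv]
    rw [← Finset.sum_neg_distrib]
    exact Finset.sum_congr rfl fun i _ => by ring
  have inv : ∀ t, Dv X b (u t) (v t) ≤ D0 ∧ (∀ j, |u t j| ≤ 2 * α * Real.exp ((Xᵀ *ᵥ lam t) j)) ∧
      (∀ j, |v t j| ≤ 2 * α * Real.exp (-(Xᵀ *ᵥ lam t) j)) := by
    intro t
    induction t with
    | zero =>
      refine ⟨?_, ?_, ?_⟩
      · refine (hKX _).trans ?_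
        refine mul_le_mul_of_nonneg_left (Finset.sum_le_sum fun j _ => ?_) hK0
        have h1 : u 0 j ^ 2 ≤ 4 * α ^ 2 := by
          have := sq_le_sq' (by linarith [(abs_le.1 (hu j)).1]) ((abs_le.1 (hu j)).2)
          linarith
        have h2 : v 0 j ^ 2 ≤ 4 * α ^ 2 := by
          have := sq_le_sq' (by linarith [(abs_le.1 (hv j)).1]) ((abs_le.1 (hv j)).2)
          linarith
        have h3 : |bet (u 0) (v 0) j| ≤ α ^ 2 := by
          rw [abs_le]; simp only [bet]
          constructor <;> nlinarith [sq_nonneg (u 0 j), sq_nonneg (v 0 j)]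
        have h4 : |(bet (u 0) (v 0) - b) j| ≤ α ^ 2 + |b j| :=
          (abs_sub _ _).trans (by gcongr)
        rw [← pow_two, ← sq_abs]
        gcongr
      · intro j; rw [hlamS]; simpa using hu j
      · intro j; rw [hlamS]; simpa using hv j
    | succ t ih =>
      obtain ⟨i1, i2, i3⟩ := ih
      have hq := hQb _ _ i1
      have hw := hbd _ _ _ i2 i3 (hCb _ _ i1)
      have hx : ∀ j, |ε * qv X b (u t) (v t) j| ≤ 1 / 2 := fun j => by
        rw [abs_mul, abs_of_pos hε]
        exact (mul_le_mul_of_nonneg_left (hq j) hε.le).trans c1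
      refine ⟨(descent X b _ _ _ _ ε K W Q hK0 hKX hε hw hq c1 c2 (hru t) (hrv t)).trans i1, ?_, ?_⟩
      · intro j
        have hxj := abs_le.1 (hx j)
        rw [hru, hlamS, Finset.sum_range_succ, neg_add, Real.exp_add, ← hlamS, abs_mul, ← mul_assoc]
        gcongr
        · exact i2 j
        · rw [abs_of_pos (by linarith)]
          linarith [Real.add_one_le_exp (-(ε * qv X b (u t) (v t) j))]
      · intro j
        have hxj := abs_le.1 (hx j)
        rw [hrv, hlamS, Finset.sum_range_succ, neg_add, neg_add, Real.exp_add, ← hlamS, abs_mul, ← mul_assoc]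
        gcongr
        · exact i3 j
        · rw [abs_of_pos (by linarith), neg_neg]
          linarith [Real.add_one_le_exp (ε * qv X b (u t) (v t) j)]
  have hq : ∀ t j, |qv X b (u t) (v t) j| ≤ Q := fun t => hQb _ _ (inv t).1
  have hw : ∀ t j, u t j ^ 2 + v t j ^ 2 ≤ W := fun t =>
    hbd _ _ _ (inv t).2.1 (inv t).2.2 (hCb _ _ (inv t).1)
  have hx : ∀ t j, |ε * qv X b (u t) (v t) j| ≤ 1 / 2 := fun t j => by
    rw [abs_mul, abs_of_pos hε]
    exact (mul_le_mul_of_nonneg_left (hq t j) hε.le).trans c1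
  have hne : ∀ t, (∀ j, u t j ≠ 0) ∧ (∀ j, v t j ≠ 0) := by
    intro t
    induction t with
    | zero => exact ⟨hu0, hv0⟩
    | succ t ih =>
      refine ⟨fun j => ?_, fun j => ?_⟩
      · have hxj := abs_le.1 (hx t j)
        rw [hru]
        exact mul_ne_zero (ih.1 j) (by linarith)
      · have hxj := abs_le.1 (hx t j)
        rw [hrv]
        exact mul_ne_zero (ih.2 j) (by linarith)
  have hDsum : Summable fun t => Dv X b (u t) (v t) := by
    have hpart : ∀ T, pot b (u T) (v T) ≤ pot b (u 0) (v 0) - ε / 2 * ∑ t ∈ Finset.range T, Dv X b (u t) (v t) := by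
      intro T
      induction T with
      | zero => simp
      | succ T ih =>
        have := pot_step X b _ _ _ _ ε K W Q hKT hε hW (hw T) (hq T) c1 c3 (hne T).1 (hne T).2 (hru T) (hrv T)
        rw [Finset.sum_range_succ]
        linarith
    refine summable_of_sum_range_le (c := (pot b (u 0) (v 0) + ∑ j, |b j| * W) / (ε / 2)) (fun t => Dv_nonneg _ _ _ _) fun T => ?_
    rw [le_div_iff₀ (by positivity)]
    have := pot_lower b (u T) (v T) W (hw T)
    linarith [hpart T]
  have hxsum : ∀ j, Summable fun t => (ε * qv X b (u t) (v t) j) ^ 2 := by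
    intro j
    refine Summable.of_nonneg_of_le (fun _ => sq_nonneg _) (fun t => ?_) (hDsum.mul_left (ε ^ 2 * K))
    rw [mul_pow, mul_assoc]
    gcongr
    exact (sq_le_dot _ j).trans (hKT _)
  have hA := fun j => log_seq (fun t => u t j) (fun t => ε * qv X b (u t) (v t) j) (hu0 j)
    (fun t => hru t j) (fun t => hx t j) (hxsum j)
  have hB := fun j => log_seq (fun t => v t j) (fun t => -(ε * qv X b (u t) (v t) j)) (hv0 j)
    (fun t => by rw [sub_neg_eq_add]; exact hrv t j) (fun t => by rw [abs_neg]; exact hx t j)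
    (by simpa only [neg_sq] using hxsum j)
  choose A A' c hc hAt hAu using hA
  choose B B' d hd hBt hBv using hB
  set s : ℕ → Fin p → ℝ := fun t => Xᵀ *ᵥ lam t with hs
  have hue : ∀ t j, u t j = c j * Real.exp (A j t + s t j) := by
    intro t j
    rw [hAu j t, hs]
    simp only [hlamS, sub_eq_add_neg]
  have hve : ∀ t j, v t j = d j * Real.exp (B j t - s t j) := by
    intro t j
    rw [hBv j t, hs]
    simp only [hlamS, Finset.sum_neg_distrib]
  have hu2 : ∀ t j, u t j ^ 2 = Real.exp (2 * (A j t + s t j)) := by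
    intro t j
    rw [hue, mul_pow, hc, one_mul, two_mul, pow_two, ← Real.exp_add]
  have hv2 : ∀ t j, v t j ^ 2 = Real.exp (2 * (B j t - s t j)) := by
    intro t j
    rw [hve, mul_pow, hd, one_mul, two_mul, pow_two, ← Real.exp_add]
  have hR1 : ∀ j, ∃ R, ∀ t, s t j ≤ R := fun j =>
    exp_bound (A j) (A' j) (hAt j) (fun t => s t j) W fun t => by
      rw [← hu2]; nlinarith [hw t j, sq_nonneg (v t j)]
  have hR2 : ∀ j, ∃ R, ∀ t, - s t j ≤ R := fun j =>
    exp_bound (B j) (B' j) (hBt j) (fun t => - s t j) W fun t => by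
      rw [← sub_eq_add_neg, ← hv2]; nlinarith [hw t j, sq_nonneg (u t j)]
  choose R1 hR1 using hR1
  choose R2 hR2 using hR2
  have hsb : ∀ t j, |s t j| ≤ ∑ j, (|R1 j| + |R2 j|) := by
    intro t j
    have : |R1 j| + |R2 j| ≤ ∑ j, (|R1 j| + |R2 j|) :=
      Finset.single_le_sum (f := fun j => |R1 j| + |R2 j|) (fun _ _ => by positivity) (Finset.mem_univ j)
    refine le_trans ?_ this
    rw [abs_le]
    constructor
    · linarith [hR2 j t, le_abs_self (R2 j), abs_nonneg (R1 j)]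
    · linarith [hR1 j t, le_abs_self (R1 j), abs_nonneg (R2 j)]
  have hXd : Tendsto (fun t => X *ᵥ (bet (u t) (v t) - b)) atTop (𝓝 0) := by
    rw [tendsto_pi_nhds]
    intro i
    have h0 := hDsum.tendsto_atTop_zero
    have h1 : Tendsto (fun t => Real.sqrt (Dv X b (u t) (v t))) atTop (𝓝 0) := by
      have := (Real.continuous_sqrt.tendsto 0).comp h0
      simpa [Function.comp_def] using this
    refine squeeze_zero_norm (fun t => ?_) h1
    rw [Real.norm_eq_abs]
    apply Real.abs_le_sqrt
    exact sq_le_dot _ i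
  obtain ⟨s', hs'⟩ := conv_s X b s (fun t j => A j t) (fun t j => B j t) A' B'
    (tendsto_pi_nhds.2 hAt) (tendsto_pi_nhds.2 hBt) _ hsb (fun t => ⟨lam t, rfl⟩) (by
      refine hXd.congr fun t => ?_
      congr 2
      funext j
      simp only [bet, hu2, hv2])
  rw [tendsto_pi_nhds] at hs'
  have hul : Tendsto u atTop (𝓝 fun j => c j * Real.exp (A' j + s' j)) := by
    rw [tendsto_pi_nhds]
    intro j
    simp only [hue]
    exact (((Real.continuous_exp.tendsto _).comp ((hAt j).add (hs' j)))).const_mul _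
  have hvl : Tendsto v atTop (𝓝 fun j => d j * Real.exp (B' j - s' j)) := by
    rw [tendsto_pi_nhds]
    intro j
    simp only [hve]
    exact (((Real.continuous_exp.tendsto _).comp ((hBt j).sub (hs' j)))).const_mul _
  refine ⟨_, _, hul, hvl, ?_⟩
  refine tendsto_nhds_unique ?_ hXd
  have hcont : Continuous fun w : (Fin p → ℝ) × (Fin p → ℝ) => X *ᵥ (bet w.1 w.2 - b) := by
    apply Continuous.matrix_mulVec continuous_const
    unfold bet
    fun_prop
  have := (hcont.tendsto _).comp (hul.prodMk_nhds hvl)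
  simpa only [Function.comp_def] using this

lemma nrm2_sq {k : ℕ} (z : Fin k → ℝ) : nrm2 z ^ 2 = z ⬝ᵥ z := by
  unfold nrm2 dotProduct
  rw [Real.sq_sqrt (by positivity)]
  simp only [pow_two]

lemma loss_min {n p : ℕ} (X : Matrix (Fin n) (Fin p) ℝ) (y : Fin n → ℝ) (b : Fin p → ℝ)
    (hb : Xᵀ *ᵥ (X *ᵥ b) = Xᵀ *ᵥ y) (gl : (Fin p → ℝ) × (Fin p → ℝ))
    (h : X *ᵥ (had gl.1 gl.2 - b) = 0) (c : (Fin p → ℝ) × (Fin p → ℝ)) :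
    lossFun X y gl ≤ lossFun X y c := by
  unfold lossFun
  gcongr ?_ * ?_
  rw [nrm2_sq, nrm2_sq]
  rw [mulVec_sub, sub_eq_zero] at h
  rw [h]
  set z := had c.1 c.2
  have e : X *ᵥ z - y = (X *ᵥ b - y) + X *ᵥ (z - b) := by rw [mulVec_sub]; abel
  have o : (X *ᵥ b - y) ⬝ᵥ (X *ᵥ (z - b)) = 0 := by
    rw [dotProduct_mulVec, ← mulVec_transpose, mulVec_sub, hb, sub_self, zero_dotProduct]
  have nn : 0 ≤ (X *ᵥ (z - b)) ⬝ᵥ (X *ᵥ (z - b)) := by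
    unfold dotProduct
    exact Finset.sum_nonneg fun _ _ => mul_self_nonneg _
  rw [e, add_dotProduct, dotProduct_add, dotProduct_add,
    dotProduct_comm (X *ᵥ (z - b)) (X *ᵥ b - y), o]
  linarith

lemma unif_prob (α : ℝ) (hα : 0 < α) : IsProbabilityMeasure (unifMeasure α) := by
  constructor
  unfold unifMeasure
  rw [Measure.smul_apply, Measure.restrict_apply_univ, Real.volume_Ioo, smul_eq_mul]
  have : α - -α = 2 * α := by ring
  rw [this]
  apply ENNReal.inv_mul_cancel
  · simp [hα]
  · exact ENNReal.ofReal_ne_top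

lemma unif_noAtoms (α : ℝ) : NullSingletonClass (unifMeasure α) := by
  constructor
  intro x
  unfold unifMeasure
  rw [Measure.smul_apply, measure_singleton, smul_zero]

lemma unif_mem (α : ℝ) : ∀ᵐ x ∂(unifMeasure α), |x| ≤ α := by
  unfold unifMeasure
  apply Measure.ae_smul_measure
  filter_upwards [ae_restrict_mem measurableSet_Ioo] with x hx
  exact abs_le.2 ⟨hx.1.le, hx.2.le⟩

lemma init_good (p : ℕ) (α : ℝ) (hα : 0 < α) :
    ∀ᵐ gl ∂(initMeasure p α), ∀ j, |gl.1 j| ≤ α ∧ |gl.2 j| ≤ α ∧ gl.1 j + gl.2 j ≠ 0 ∧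
      gl.1 j - gl.2 j ≠ 0 := by
  haveI := unif_prob α hα
  haveI := unif_noAtoms α
  rw [ae_all_iff]
  intro j
  have hpi : ∀ᵐ g ∂(Measure.pi fun _ : Fin p => unifMeasure α), |g j| ≤ α :=
    (Measure.quasiMeasurePreserving_eval (fun _ : Fin p => unifMeasure α) j).ae (unif_mem α)
  have h1 : ∀ᵐ gl ∂(initMeasure p α), |gl.1 j| ≤ α := Measure.quasiMeasurePreserving_fst.ae hpi
  have h2 : ∀ᵐ gl ∂(initMeasure p α), |gl.2 j| ≤ α := Measure.quasiMeasurePreserving_snd.ae hpi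
  have h3 : ∀ᵐ gl ∂(initMeasure p α), gl.1 j + gl.2 j ≠ 0 := by
    have hm : MeasurableSet {gl : (Fin p → ℝ) × (Fin p → ℝ) | gl.1 j + gl.2 j = 0} :=
      measurableSet_eq_fun (by fun_prop) (by fun_prop)
    rw [ae_iff]
    simp only [ne_eq, not_not]
    refine (Measure.measure_prod_null hm).2 (Eventually.of_forall fun g => ?_)
    have e : (Prod.mk g ⁻¹' {gl : (Fin p → ℝ) × (Fin p → ℝ) | gl.1 j + gl.2 j = 0})
        = {l | l j = - g j} := by
      ext l; simp only [Set.mem_preimage, Set.mem_ofPred_eq]; constructor <;> intro h <;> linarith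
    beta_reduce
    rw [e]
    exact Measure.pi_hyperplane _ j _
  have h4 : ∀ᵐ gl ∂(initMeasure p α), gl.1 j - gl.2 j ≠ 0 := by
    have hm : MeasurableSet {gl : (Fin p → ℝ) × (Fin p → ℝ) | gl.1 j - gl.2 j = 0} :=
      measurableSet_eq_fun (by fun_prop) (by fun_prop)
    rw [ae_iff]
    simp only [ne_eq, not_not]
    refine (Measure.measure_prod_null hm).2 (Eventually.of_forall fun g => ?_)
    have e : (Prod.mk g ⁻¹' {gl : (Fin p → ℝ) × (Fin p → ℝ) | gl.1 j - gl.2 j = 0})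
        = {l | l j = g j} := by
      ext l; simp only [Set.mem_preimage, Set.mem_ofPred_eq]; constructor <;> intro h <;> linarith
    beta_reduce
    rw [e]
    exact Measure.pi_hyperplane _ j _
  filter_upwards [h1, h2, h3, h4] with gl a1 a2 a3 a4
  exact ⟨a1, a2, a3, a4⟩

lemma init_prob (p : ℕ) (α : ℝ) (hα : 0 < α) : IsProbabilityMeasure (initMeasure p α) := by
  haveI := unif_prob α hα
  unfold initMeasure
  infer_instance

/-- For sufficiently small step sizes, gradient descent on `f(g,l)` with i.i.d.
`Unif(−α, α)` initialization converges almost surely to a global minimum of `f`. -/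
theorem stmt2 (n p : ℕ) (X : Matrix (Fin n) (Fin p) ℝ) (y : Fin n → ℝ)
    (α : ℝ) (hα : 0 < α) :
    ∃ η₀ : ℝ, 0 < η₀ ∧ ∀ η : ℝ, 0 < η → η < η₀ →
      initMeasure p α
          {gl0 | ∃ glim : (Fin p → ℝ) × (Fin p → ℝ),
            Filter.Tendsto (fun t => (gdStep X y η)^[t] gl0) Filter.atTop (nhds glim) ∧
            ∀ b, lossFun X y glim ≤ lossFun X y b} = 1 := by
  obtain ⟨b, hb⟩ := normal_eq X y
  obtain ⟨ε₀, hε₀, hcore⟩ := core X b α hα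
  obtain ⟨N, hN, hNX⟩ : ∃ N : ℝ, 0 < N ∧ ∀ w : Fin n → ℝ, (n : ℝ)⁻¹ • Xᵀ *ᵥ w = N⁻¹ • Xᵀ *ᵥ w := by
    rcases Nat.eq_zero_or_pos n with h0 | h0
    · subst h0
      refine ⟨1, one_pos, fun w => ?_⟩
      have : Xᵀ *ᵥ w = 0 := by
        funext j
        simp [mulVec, dotProduct]
      rw [this, smul_zero, smul_zero]
    · exact ⟨n, by exact_mod_cast h0, fun _ => rfl⟩
  refine ⟨N * ε₀, by positivity, fun η hη hη0 => ?_⟩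
  haveI := init_prob p α hα
  have hae : ∀ᵐ gl0 ∂(initMeasure p α), gl0 ∈ {gl0 | ∃ glim : (Fin p → ℝ) × (Fin p → ℝ),
            Filter.Tendsto (fun t => (gdStep X y η)^[t] gl0) Filter.atTop (nhds glim) ∧
            ∀ b, lossFun X y glim ≤ lossFun X y b} := by
    filter_upwards [init_good p α hα] with gl0 hg
    set S : ℕ → (Fin p → ℝ) × (Fin p → ℝ) := fun t => (gdStep X y η)^[t] gl0 with hS
    have hS0 : S 0 = gl0 := rfl
    have hSs : ∀ t, S (t + 1) = gdStep X y η (S t) := fun t => Function.iterate_succ_apply' _ _ _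
    have hbet : ∀ g l : Fin p → ℝ, bet (g + l) (g - l) = had g l := by
      intro g l
      funext j
      simp only [bet, had, Pi.add_apply, Pi.sub_apply]
      ring
    have hqv : ∀ g l : Fin p → ℝ, Xᵀ *ᵥ (X *ᵥ (had g l) - y) = qv X b (g + l) (g - l) := by
      intro g l
      rw [qv, hbet, mulVec_sub, mulVec_sub, mulVec_sub, hb]
    have hstep1 : ∀ t j, (S (t + 1)).1 j = (S t).1 j - η / N * ((S t).2 j * qv X b ((S t).1 + (S t).2) ((S t).1 - (S t).2) j) := by
      intro t j
      rw [hSs, gdStep, hNX, hqv]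
      simp only [had, Pi.sub_apply, Pi.smul_apply, smul_eq_mul]
      ring
    have hstep2 : ∀ t j, (S (t + 1)).2 j = (S t).2 j - η / N * ((S t).1 j * qv X b ((S t).1 + (S t).2) ((S t).1 - (S t).2) j) := by
      intro t j
      rw [hSs, gdStep, hNX, hqv]
      simp only [had, Pi.sub_apply, Pi.smul_apply, smul_eq_mul]
      ring
    obtain ⟨u', v', hu, hv, hX⟩ := hcore (η / N) (by positivity)
      (by rw [div_lt_iff₀ hN]; linarith) (fun t => (S t).1 + (S t).2) (fun t => (S t).1 - (S t).2)
      (fun j => by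
        rw [hS0]
        have := hg j
        exact (abs_add_le _ _).trans (by linarith [this.1, this.2.1]))
      (fun j => by
        rw [hS0]
        have := hg j
        exact (abs_sub _ _).trans (by linarith [this.1, this.2.1]))
      (fun j => by rw [hS0]; exact (hg j).2.2.1)
      (fun j => by rw [hS0]; exact (hg j).2.2.2)
      (fun t j => by
        simp only [Pi.add_apply, hstep1, hstep2]
        ring)
      (fun t j => by
        simp only [Pi.sub_apply, hstep1, hstep2]
        ring)
    refine ⟨((1 / 2 : ℝ) • (u' + v'), (1 / 2 : ℝ) • (u' - v')), ?_, ?_⟩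
    · have h1 := (hu.add hv).const_smul (1 / 2 : ℝ)
      have h2 := (hu.sub hv).const_smul (1 / 2 : ℝ)
      refine (h1.prodMk_nhds h2).congr fun t => ?_
      ext j
      · simp; ring
      · simp; ring
    · apply loss_min X y b hb
      have : had ((1 / 2 : ℝ) • (u' + v')) ((1 / 2 : ℝ) • (u' - v')) = bet u' v' := by
        funext j
        simp only [bet, had, Pi.smul_apply, Pi.add_apply, Pi.sub_apply, smul_eq_mul]
        ring
      simp only [this]
      exact hX
  exact (measure_congr (eventuallyEq_univ.2 hae)).trans measure_univ
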